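/- Let 0 < ε < √2·log 2 and let δ ∈ (ε, 1) satisfy g(δ, ε) = 0. Then for every x = (x₁, x₂) ∈ Ω_ε there exists φ ∈ BMO^d_ε([0,1]) with ∫₀¹ φ = x₁, ∫₀¹ φ² = x₂, and ∫₀¹ e^φ = B⁺_δ(x). -/

import Mathlib

open MeasureTheory Real

/-- The average of `φ` over the interval with endpoints `a`, `b`. -/
noncomputable def avg (φ : ℝ → ℝ) (a b : ℝ) : ℝ := (∫ t in a..b, φ t) / (b - a)

/-- `φ ∈ BMO_ε([a,b])`: `φ` and `φ²` are integrable on `[a,b]` and the mean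
oscillation `⟨φ²⟩_J − ⟨φ⟩_J²` is at most `ε²` on every nondegenerate
subinterval `J = [c,d] ⊆ [a,b]`. -/
def BMOe (ε a b : ℝ) (φ : ℝ → ℝ) : Prop :=
  IntervalIntegrable φ volume a b ∧
  IntervalIntegrable (fun t => (φ t) ^ 2) volume a b ∧
  ∀ c d : ℝ, a ≤ c → c < d → d ≤ b →
    avg (fun t => (φ t) ^ 2) c d - (avg φ c d) ^ 2 ≤ ε ^ 2
/-- `φ ∈ BMO^d_ε([0,1])`: `φ` and `φ²` are integrable on `[0,1]` and the mean
oscillation is at most `ε²` on every dyadic subinterval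
`[k/2^n, (k+1)/2^n]` of `[0,1]`. -/
def BMOd (ε : ℝ) (φ : ℝ → ℝ) : Prop :=
  IntervalIntegrable φ volume 0 1 ∧
  IntervalIntegrable (fun t => (φ t) ^ 2) volume 0 1 ∧
  ∀ n k : ℕ, k < 2 ^ n →
    avg (fun t => (φ t) ^ 2) ((k : ℝ) / 2 ^ n) (((k : ℝ) + 1) / 2 ^ n)
      - (avg φ ((k : ℝ) / 2 ^ n) (((k : ℝ) + 1) / 2 ^ n)) ^ 2 ≤ ε ^ 2
/-- The parabolic strip `Ω_ε = {x : x₁² ≤ x₂ ≤ x₁² + ε²}`. -/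
def Omega (ε : ℝ) : Set (ℝ × ℝ) := {x | x.1 ^ 2 ≤ x.2 ∧ x.2 ≤ x.1 ^ 2 + ε ^ 2}

/-- The upper Bellman function `B⁺_δ`. -/
noncomputable def Bp (δ : ℝ) (x : ℝ × ℝ) : ℝ :=
  (1 - Real.sqrt (δ ^ 2 + x.1 ^ 2 - x.2)) / (1 - δ) *
    Real.exp (x.1 + Real.sqrt (δ ^ 2 + x.1 ^ 2 - x.2) - δ)

/-- The lower Bellman function `B⁻_δ`. -/
noncomputable def Bm (δ : ℝ) (x : ℝ × ℝ) : ℝ :=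
  (1 + Real.sqrt (δ ^ 2 + x.1 ^ 2 - x.2)) / (1 + δ) *
    Real.exp (x.1 - Real.sqrt (δ ^ 2 + x.1 ^ 2 - x.2) + δ)
/-- The function `g(δ,ε)` whose root determines the sharp dyadic parameter `δ⁺(ε)`. -/
noncomputable def g (δ ε : ℝ) : ℝ :=
  (1 - Real.sqrt (δ ^ 2 - ε ^ 2)) * Real.exp (Real.sqrt (δ ^ 2 - ε ^ 2)) *
      (2 - Real.exp (ε / Real.sqrt 2)) -
    (1 - δ) * Real.exp (δ - ε / Real.sqrt 2)

/-! Parametrise the tangent to the curve `x₂ = x₁² + δ²` which reaches the parabola `x₂ = x₁²` at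
`(u, u²)`; every point of `Ω_ε` lies on the part of such a tangent between `(u, u²)` and the point
`(c, c² + ε²)` where it leaves `Ω_ε`, and `B⁺_δ` is affine there. It therefore suffices to realise
the two ends and to mix them.

The lower end is realised by the constant `u`, the upper end by the step function with value
`c + (n - 1) h`, `h = ε / √2`, on `[2⁻ⁿ⁻¹, 2⁻ⁿ)`: its left half is its own translate by `h` and its
right half is constant, which yields its moments, and `g(δ, ε) = 0` says precisely that its
exponential moment is `B⁺_δ(c, c² + ε²)`. A mixture with weights `1 - α` and `α` that respects the
dyadic structure is obtained by filling `[0, α)` with copies of the step function on maximal dyadic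
intervals: the halves of such a mixture are again such mixtures or one of the two ingredients, so
the oscillation on every dyadic interval is controlled by that of a mixture on `[0, 1]`.
-/

open Set

section Halves

variable {β γ : Type*} {i : ℕ} {F f : ℝ → β}

/-- `f` is the restriction of `F` to the half `(i/2, (i+1)/2)` of the unit interval, `i = 0, 1`,
rescaled to `(0, 1)`. Endpoints are left free, as they do not affect averages. -/
def IsHalf (i : ℕ) (F f : ℝ → β) : Prop :=
  ∀ t ∈ Ioo (0 : ℝ) 1, F ((i + t) / 2) = f t

namespace IsHalf

lemma comp (H : IsHalf i F f) (G : β → γ) : IsHalf i (fun t => G (F t)) (fun t => G (f t)) :=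
  fun t ht => congrArg G (H t ht)

lemma integral_eq {E : Type*} [NormedAddCommGroup E] [NormedSpace ℝ E] {F f : ℝ → E}
    (H : IsHalf i F f) {a b : ℝ} (ha : 0 ≤ a) (hab : a ≤ b) (hb : b ≤ 1) :
    ∫ t in (i + a) / 2..(i + b) / 2, F t = (2 : ℝ)⁻¹ • ∫ t in a..b, f t := by
  have hF : ∫ t in a..b, F (i / 2 + t / 2) = ∫ t in a..b, f t :=
    intervalIntegral.integral_congr_Ioo_of_le hab fun t ht => by
      simpa only [add_div] using H t ⟨ha.trans_lt ht.1, ht.2.trans_le hb⟩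
  rw [← hF, intervalIntegral.inv_smul_integral_comp_add_div, add_div, add_div]

lemma avg_eq {F f : ℝ → ℝ} (H : IsHalf i F f) {a b : ℝ} (ha : 0 ≤ a) (hab : a ≤ b)
    (hb : b ≤ 1) : avg F ((i + a) / 2) ((i + b) / 2) = avg f a b := by
  have hlen : (i + b) / 2 - (i + a) / 2 = 2⁻¹ * (b - a) := by ring
  rw [avg, avg, H.integral_eq ha hab hb, hlen, smul_eq_mul,
    mul_div_mul_left _ _ (by norm_num)]

end IsHalf

lemma integral_eq_of_isHalf {E : Type*} [NormedAddCommGroup E] [NormedSpace ℝ E]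
    {F f₀ f₁ : ℝ → E} (hF : IntervalIntegrable F volume 0 1) (H₀ : IsHalf 0 F f₀)
    (H₁ : IsHalf 1 F f₁) :
    ∫ t in (0 : ℝ)..1, F t =
      (2 : ℝ)⁻¹ • ((∫ t in (0 : ℝ)..1, f₀ t) + ∫ t in (0 : ℝ)..1, f₁ t) := by
  have h₀ := H₀.integral_eq le_rfl zero_le_one le_rfl
  have h₁ := H₁.integral_eq le_rfl zero_le_one le_rfl
  simp only [Nat.cast_zero, Nat.cast_one, add_zero, zero_add, zero_div, one_add_one_eq_two,
    div_self (two_ne_zero' ℝ)] at h₀ h₁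
  have hmid : (1 / 2 : ℝ) ∈ uIcc 0 1 := by norm_num [mem_uIcc]
  rw [smul_add, ← h₀, ← h₁, intervalIntegral.integral_add_adjacent_intervals
    (hF.mono_set (uIcc_subset_uIcc_left hmid)) (hF.mono_set (uIcc_subset_uIcc_right hmid))]

end Halves

section DyadicOscillation

/-- The mean oscillation `⟨φ²⟩_J - ⟨φ⟩_J²` on the dyadic interval `J = [k/2ⁿ, (k+1)/2ⁿ]`, the
quantity bounded in `BMOd`. -/
noncomputable def dyadicOsc (φ : ℝ → ℝ) (n k : ℕ) : ℝ :=
  avg (fun t => φ t ^ 2) (k / 2 ^ n) ((k + 1) / 2 ^ n) -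
    avg φ (k / 2 ^ n) ((k + 1) / 2 ^ n) ^ 2

lemma dyadicOsc_zero (φ : ℝ → ℝ) :
    dyadicOsc φ 0 0 = (∫ t in (0 : ℝ)..1, φ t ^ 2) - (∫ t in (0 : ℝ)..1, φ t) ^ 2 := by
  simp [dyadicOsc, avg]

lemma dyadicOsc_const (c : ℝ) (n k : ℕ) : dyadicOsc (fun _ => c) n k = 0 := by
  have hlen : ((k : ℝ) + 1) / 2 ^ n - k / 2 ^ n ≠ 0 := by simp [← sub_div]
  simp [dyadicOsc, avg, mul_div_cancel_left₀ _ hlen]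

lemma IsHalf.dyadicOsc_succ {F f : ℝ → ℝ} {i n k : ℕ} (H : IsHalf i F f) (hk : k < 2 ^ n) :
    dyadicOsc F (n + 1) (i * 2 ^ n + k) = dyadicOsc f n k := by
  have hleft : ((i * 2 ^ n + k : ℕ) : ℝ) / 2 ^ (n + 1) = (i + k / 2 ^ n) / 2 := by
    push_cast; rw [pow_succ]; field_simp
  have hright : (((i * 2 ^ n + k : ℕ) : ℝ) + 1) / 2 ^ (n + 1) = (i + (k + 1) / 2 ^ n) / 2 := by
    push_cast; field_simp; ring
  have ha : (0 : ℝ) ≤ k / 2 ^ n := by positivity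
  have hab : (k : ℝ) / 2 ^ n ≤ (k + 1) / 2 ^ n := by gcongr; linarith
  have hb : ((k : ℝ) + 1) / 2 ^ n ≤ 1 := by
    rw [div_le_one (by positivity)]; exact_mod_cast hk
  rw [dyadicOsc, dyadicOsc, hleft, hright, (H.comp (· ^ 2)).avg_eq ha hab hb, H.avg_eq ha hab hb]

lemma dyadicOsc_le_of_forall_isHalf {𝓕 : Set (ℝ → ℝ)} {C : ℝ}
    (hunit : ∀ F ∈ 𝓕, dyadicOsc F 0 0 ≤ C)
    (hhalf : ∀ F ∈ 𝓕, ∀ i < 2, ∃ f, IsHalf i F f ∧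
      (f ∈ 𝓕 ∨ ∀ n, ∀ k < 2 ^ n, dyadicOsc f n k ≤ C))
    (n : ℕ) : ∀ F ∈ 𝓕, ∀ k < 2 ^ n, dyadicOsc F n k ≤ C := by
  induction n with
  | zero =>
    intro F hF k hk
    obtain rfl : k = 0 := by simpa using hk
    exact hunit F hF
  | succ n ih =>
    intro F hF k hk
    obtain ⟨f, H, hf⟩ := hhalf F hF (k / 2 ^ n) (Nat.div_lt_of_lt_mul (by rwa [← pow_succ]))
    have hmod : k % 2 ^ n < 2 ^ n := Nat.mod_lt _ (by positivity)
    rw [← Nat.div_add_mod' k (2 ^ n), H.dyadicOsc_succ hmod]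
    exact hf.elim (fun hf => ih f hf _ hmod) (fun hf => hf n _ hmod)

end DyadicOscillation

section LogStep

/-- The dyadic analogue of `t ↦ c + h log₂ (1/t)`: the step function equal to `c + (n - 1) h` on
`[2⁻ⁿ⁻¹, 2⁻ⁿ)`, normalised to have mean `c` on `[0, 1]`. -/
noncomputable def logStep (h c t : ℝ) : ℝ := c - h * (2 + ⌊logb 2 t⌋)

variable (h c : ℝ)

lemma measurable_floor_logb : Measurable fun t : ℝ => (⌊logb 2 t⌋ : ℝ) := by
  unfold logb
  fun_prop

lemma measurable_logStep : Measurable (logStep h c) :=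
  measurable_const.sub ((measurable_floor_logb.const_add 2).const_mul h)

lemma logStep_add (d t : ℝ) : logStep h (c + d) t = logStep h c t + d := by
  unfold logStep; ring

lemma isHalf_zero_logStep : IsHalf 0 (logStep h c) (logStep h (c + h)) := by
  intro t ht
  have hlog : logb 2 (t / 2) = logb 2 t - 1 := by
    rw [logb_div ht.1.ne' two_ne_zero, logb_self_eq_one one_lt_two]
  simp only [logStep, Nat.cast_zero, zero_add, hlog, Int.floor_sub_one]
  push_cast
  ring

lemma isHalf_one_logStep : IsHalf 1 (logStep h c) (fun _ => c - h) := by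
  intro t ⟨ht0, ht1⟩
  have hfloor : ⌊logb 2 ((1 + t) / 2)⌋ = -1 := by
    rw [Int.floor_eq_iff]
    push_cast
    refine ⟨?_, by linarith [logb_neg one_lt_two (x := (1 + t) / 2) (by linarith) (by linarith)]⟩
    rw [le_logb_iff_rpow_le one_lt_two (by linarith), rpow_neg_one]
    linarith
  simp only [logStep, Nat.cast_one, hfloor]
  push_cast
  ring

lemma integrableOn_exp_mul_floor_logb {v : ℝ} (hv : -log 2 < v) :
    IntegrableOn (fun t => exp (v * ⌊logb 2 t⌋)) (Ioc 0 1) := by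
  have hpow : IntegrableOn (fun t : ℝ => exp |v| * t ^ (v / log 2)) (Ioc 0 1) := by
    rw [← intervalIntegrable_iff_integrableOn_Ioc_of_le zero_le_one]
    refine (intervalIntegral.intervalIntegrable_rpow' ?_).const_mul _
    rwa [lt_div_iff₀ (log_pos one_lt_two), neg_one_mul]
  refine hpow.mono' (measurable_floor_logb.const_mul v).exp.aestronglyMeasurable ?_
  filter_upwards [ae_restrict_mem measurableSet_Ioc] with t ht
  have hround : |⌊logb 2 t⌋ - logb 2 t| ≤ 1 := by
    rw [abs_sub_comm, Int.self_sub_floor, Int.abs_fract]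
    exact (Int.fract_lt_one _).le
  have hmul : v * (⌊logb 2 t⌋ - logb 2 t) ≤ |v| := by
    grw [le_abs_self (v * _), abs_mul, hround, mul_one]
  rw [norm_of_nonneg (exp_nonneg _), rpow_def_of_pos ht.1, ← exp_add, exp_le_exp]
  have hlogb : log t * (v / log 2) = v * logb 2 t := by unfold logb; ring
  linarith

lemma memLp_floor_logb :
    MemLp (fun t : ℝ => (⌊logb 2 t⌋ : ℝ)) 2 (volume.restrict (Ioc 0 1)) := by
  have hsub : Ioi (-log 2) ⊆ ProbabilityTheory.integrableExpSet
      (fun t : ℝ => (⌊logb 2 t⌋ : ℝ)) (volume.restrict (Ioc 0 1)) :=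
    fun v hv => integrableOn_exp_mul_floor_logb hv
  exact ProbabilityTheory.memLp_of_mem_interior_integrableExpSet
    (interior_maximal hsub isOpen_Ioi (neg_neg_of_pos (log_pos one_lt_two))) 2

lemma memLp_logStep : MemLp (logStep h c) 2 (volume.restrict (Ioc 0 1)) := by
  have hstep : MemLp (fun t : ℝ => h * (2 + (⌊logb 2 t⌋ : ℝ))) 2 (volume.restrict (Ioc 0 1)) :=
    ((memLp_const (2 : ℝ)).add memLp_floor_logb).const_mul h
  exact (memLp_const c).sub hstep

lemma intervalIntegrable_logStep : IntervalIntegrable (logStep h c) volume 0 1 :=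
  (intervalIntegrable_iff_integrableOn_Ioc_of_le zero_le_one).mpr
    ((memLp_logStep h c).integrable one_le_two)

lemma intervalIntegrable_logStep_sq :
    IntervalIntegrable (fun t => logStep h c t ^ 2) volume 0 1 :=
  (intervalIntegrable_iff_integrableOn_Ioc_of_le zero_le_one).mpr (memLp_logStep h c).integrable_sq

variable {h} in
lemma intervalIntegrable_exp_logStep (hh : h < log 2) :
    IntervalIntegrable (fun t => exp (logStep h c t)) volume 0 1 := by
  rw [intervalIntegrable_iff_integrableOn_Ioc_of_le zero_le_one]
  refine ((integrableOn_exp_mul_floor_logb (neg_lt_neg hh)).const_mul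
    (exp (c - 2 * h))).congr (.of_forall fun t => ?_)
  simp only [logStep, ← exp_add]
  ring_nf

lemma integral_logStep : ∫ t in (0 : ℝ)..1, logStep h c t = c := by
  have hint := intervalIntegrable_logStep h c
  have H := integral_eq_of_isHalf hint (isHalf_zero_logStep h c) (isHalf_one_logStep h c)
  simp only [logStep_add, intervalIntegral.integral_add hint intervalIntegrable_const,
    intervalIntegral.integral_const, smul_eq_mul] at H
  linarith

lemma integral_logStep_sq : ∫ t in (0 : ℝ)..1, logStep h c t ^ 2 = c ^ 2 + 2 * h ^ 2 := by
  have hint := (intervalIntegrable_logStep h c).const_mul (2 * h)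
  have hsq := intervalIntegrable_logStep_sq h c
  have hexpand : ∀ t, logStep h (c + h) t ^ 2 =
      logStep h c t ^ 2 + (2 * h * logStep h c t + h ^ 2) := fun t => by
    rw [logStep_add]; ring
  have H := integral_eq_of_isHalf hsq ((isHalf_zero_logStep h c).comp (· ^ 2))
    ((isHalf_one_logStep h c).comp (· ^ 2))
  simp only [hexpand, intervalIntegral.integral_add hsq (hint.add intervalIntegrable_const),
    intervalIntegral.integral_add hint intervalIntegrable_const,
    intervalIntegral.integral_const_mul, integral_logStep,
    intervalIntegral.integral_const, smul_eq_mul] at H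
  linarith

variable {h} in
lemma integral_exp_logStep (hh : h < log 2) :
    ∫ t in (0 : ℝ)..1, exp (logStep h c t) = exp (c - h) / (2 - exp h) := by
  have H := integral_eq_of_isHalf (intervalIntegrable_exp_logStep c hh)
    ((isHalf_zero_logStep h c).comp exp) ((isHalf_one_logStep h c).comp exp)
  simp only [logStep_add, exp_add, intervalIntegral.integral_mul_const,
    intervalIntegral.integral_const, smul_eq_mul] at H
  have hexp : 0 < 2 - exp h := sub_pos.mpr ((lt_log_iff_exp_lt two_pos).mp hh)
  rw [eq_div_iff hexp.ne']
  linarith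

variable {h} in
lemma bmod_logStep {ε : ℝ} (hε : 2 * h ^ 2 ≤ ε ^ 2) : BMOd ε (logStep h c) := by
  refine ⟨intervalIntegrable_logStep h c, intervalIntegrable_logStep_sq h c, fun n k hk =>
    dyadicOsc_le_of_forall_isHalf (𝓕 := range (logStep h)) ?_ ?_ n _ ⟨c, rfl⟩ k hk⟩
  · rintro _ ⟨c, rfl⟩
    rw [dyadicOsc_zero, integral_logStep, integral_logStep_sq]
    linarith
  · rintro _ ⟨c, rfl⟩ i hi
    interval_cases i
    · exact ⟨_, isHalf_zero_logStep h c, .inl ⟨_, rfl⟩⟩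
    · exact ⟨_, isHalf_one_logStep h c, .inr fun n k _ =>
        (dyadicOsc_const _ n k).trans_le (sq_nonneg ε)⟩

end LogStep

section DyadicMix

variable {β : Type*}

open Classical in
/-- The dyadic mixture of `T` and the constant `u` with weights `α` and `1 - α`: a rescaled copy of
`T` on each maximal dyadic interval whose right end lies strictly below `α`, and `u` elsewhere.
Strictness makes the halves of a mixture mixtures again, also for `α = 1`. -/
noncomputable def dyadicMix (T : ℝ → β) (u : β) (α t : ℝ) : β :=
  if h : ∃ n : ℕ, (⌊2 ^ n * t⌋ : ℝ) + 1 < 2 ^ n * α then T (Int.fract (2 ^ Nat.find h * t)) else u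

variable {T : ℝ → β} {α t : ℝ} (u : β)

lemma dyadicMix_of_le (h : α ≤ t) : dyadicMix T u α t = u := by
  refine dif_neg fun ⟨n, hn⟩ => ?_
  have hle : (2 : ℝ) ^ n * α ≤ 2 ^ n * t := by gcongr
  linarith [Int.lt_floor_add_one ((2 : ℝ) ^ n * t)]

lemma dyadicMix_of_floor_add_one_lt (h : (⌊t⌋ : ℝ) + 1 < α) :
    dyadicMix T u α t = T (Int.fract t) := by
  classical
  have h0 : (⌊2 ^ 0 * t⌋ : ℝ) + 1 < 2 ^ 0 * α := by simpa using h
  rw [dyadicMix, dif_pos ⟨0, h0⟩, (Nat.find_eq_zero _).mpr h0, pow_zero, one_mul]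

lemma dyadicMix_two_mul_sub (h : α ≤ ⌊t⌋ + 1) (j : ℤ) :
    dyadicMix T u (2 * α - j) (2 * t - j) = dyadicMix T u α t := by
  classical
  have hshift (n : ℕ) : (2 : ℝ) ^ (n + 1) * t = 2 ^ n * (2 * t - j) + (2 ^ n * j : ℤ) := by
    push_cast; ring
  have hiff (n : ℕ) : (⌊2 ^ n * (2 * t - j)⌋ : ℝ) + 1 < 2 ^ n * (2 * α - j) ↔
      (⌊2 ^ (n + 1) * t⌋ : ℝ) + 1 < 2 ^ (n + 1) * α := by
    rw [hshift, Int.floor_add_intCast, pow_succ]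
    push_cast
    constructor <;> (intro; linarith)
  have h0 : ¬ (⌊2 ^ 0 * t⌋ : ℝ) + 1 < 2 ^ 0 * α := by simpa using h
  unfold dyadicMix
  simp only [hiff]
  by_cases hex : ∃ n : ℕ, (⌊2 ^ n * t⌋ : ℝ) + 1 < 2 ^ n * α
  · have hex' : ∃ n : ℕ, (⌊2 ^ (n + 1) * t⌋ : ℝ) + 1 < 2 ^ (n + 1) * α :=
      (Nat.or_exists_add_one.mpr hex).resolve_left h0
    rw [dif_pos hex, dif_pos hex', Nat.find_comp_succ hex hex' h0, hshift, Int.fract_add_intCast]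
  · rw [dif_neg hex, dif_neg fun ⟨n, hn⟩ => hex ⟨n + 1, hn⟩]

lemma isHalf_dyadicMix (hα : α ≤ 1) (i : ℕ) :
    IsHalf i (dyadicMix T u α) (dyadicMix T u (2 * α - i)) := by
  intro t ht
  have hfloor : (0 : ℝ) ≤ ⌊(i + t) / 2⌋ :=
    mod_cast Int.floor_nonneg.mpr (div_nonneg (add_nonneg i.cast_nonneg ht.1.le) two_pos.le)
  rw [← dyadicMix_two_mul_sub u (by linarith) i]
  congr 1
  push_cast
  ring

lemma isHalf_one_dyadicMix (hα : α ≤ 1 / 2) : IsHalf 1 (dyadicMix T u α) (fun _ => u) :=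
  fun t ht => dyadicMix_of_le u (by push_cast; linarith [ht.1])

lemma isHalf_zero_dyadicMix (hα : 1 / 2 < α) (hα' : α ≤ 1) : IsHalf 0 (dyadicMix T u α) T := by
  intro t ht
  have hmem : t ∈ Ico (0 : ℝ) 1 := Ioo_subset_Ico_self ht
  have hlt : (⌊t⌋ : ℝ) + 1 < 2 * α - (0 : ℕ) := by
    rw [Int.floor_eq_zero_iff.mpr hmem]
    push_cast
    linarith
  rw [isHalf_dyadicMix u hα' 0 t ht, dyadicMix_of_floor_add_one_lt u hlt,
    Int.fract_eq_self.mpr hmem]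

lemma exists_isHalf_dyadicMix (T : ℝ → β) (hα : α ∈ Icc (0 : ℝ) 1) :
    ∃ α' ∈ Icc (0 : ℝ) 1,
      (α = α' / 2 ∧ IsHalf 0 (dyadicMix T u α) (dyadicMix T u α') ∧
        IsHalf 1 (dyadicMix T u α) (fun _ => u)) ∨
      (α = (1 + α') / 2 ∧ IsHalf 0 (dyadicMix T u α) T ∧
        IsHalf 1 (dyadicMix T u α) (dyadicMix T u α')) := by
  rcases le_or_gt α (1 / 2) with h | h
  · refine ⟨2 * α, ⟨by linarith [hα.1], by linarith⟩, .inl ⟨by ring, ?_, isHalf_one_dyadicMix u h⟩⟩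
    simpa using isHalf_dyadicMix u hα.2 0
  · refine ⟨2 * α - 1, ⟨by linarith, by linarith [hα.2]⟩,
      .inr ⟨by ring, isHalf_zero_dyadicMix u h hα.2, ?_⟩⟩
    simpa using isHalf_dyadicMix u hα.2 1

lemma measurable_dyadicMix [MeasurableSpace β] (hT : Measurable T) (α : ℝ) :
    Measurable (dyadicMix T u α) := by
  classical
  have hset (n : ℕ) : MeasurableSet {t : ℝ | (⌊2 ^ n * t⌋ : ℝ) + 1 < 2 ^ n * α} :=
    measurableSet_lt (by fun_prop) measurable_const
  have hfind := Measurable.find (α := {t : ℝ | ∃ n : ℕ, (⌊2 ^ n * t⌋ : ℝ) + 1 < 2 ^ n * α})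
    (f := fun n t => T (Int.fract (2 ^ n * (t : ℝ)))) (fun n => hT.comp (by fun_prop))
    (fun n => measurable_subtype_coe (hset n)) Subtype.property
  refine hfind.dite measurable_const ?_
  simpa only [Set.ofPred_exists] using MeasurableSet.iUnion hset

lemma eq_zero_of_forall_exists_abs_le_half {ι : Type*} {D : ι → ℝ} {C : ℝ}
    (hbdd : ∀ i, |D i| ≤ C) (hD : ∀ i, ∃ j, |D i| ≤ |D j| / 2) (i : ι) : D i = 0 := by
  have : Nonempty ι := ⟨i⟩
  have hle (i : ι) : |D i| ≤ ⨆ j, |D j| := le_ciSup ⟨C, forall_mem_range.mpr hbdd⟩ i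
  have hhalf : ⨆ j, |D j| ≤ (⨆ j, |D j|) / 2 := ciSup_le fun i => by
    obtain ⟨j, hj⟩ := hD i
    linarith [hle j]
  exact abs_nonpos_iff.mp (by linarith [hle i])

variable [MeasurableSpace β]

-- The error of the formula halves each time the mixture is split into its halves.
lemma integral_comp_dyadicMix_of_bounded (hT : Measurable T) {G : β → ℝ} (hG : Measurable G)
    {C : ℝ} (hC : ∀ y, |G y| ≤ C) (hα : α ∈ Icc (0 : ℝ) 1) :
    ∫ t in (0 : ℝ)..1, G (dyadicMix T u α t) =
      (1 - α) * G u + α * ∫ t in (0 : ℝ)..1, G (T t) := by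
  have habs (f : ℝ → β) : |∫ t in (0 : ℝ)..1, G (f t)| ≤ C := by
    simpa using intervalIntegral.norm_integral_le_of_norm_le_const (a := 0) (b := 1)
      (f := fun t => G (f t)) fun t _ => hC (f t)
  let D (α : Icc (0 : ℝ) 1) : ℝ := (∫ t in (0 : ℝ)..1, G (dyadicMix T u α t)) -
    ((1 - α) * G u + α * ∫ t in (0 : ℝ)..1, G (T t))
  suffices hD : D ⟨α, hα⟩ = 0 from sub_eq_zero.mp hD
  refine eq_zero_of_forall_exists_abs_le_half (C := 2 * C) ?_ ?_ _
  · rintro ⟨α, hα₀, hα₁⟩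
    have hmix := abs_le.mp (habs (dyadicMix T u α))
    have hself := abs_le.mp (habs T)
    have hconst := abs_le.mp (hC u)
    exact abs_le.mpr ⟨by dsimp only [D]; nlinarith, by dsimp only [D]; nlinarith⟩
  · rintro ⟨α, hα⟩
    have hint : IntervalIntegrable (fun t => G (dyadicMix T u α t)) volume 0 1 :=
      (intervalIntegrable_const (c := C)).mono_fun'
        (hG.comp (measurable_dyadicMix u hT α)).aestronglyMeasurable (.of_forall fun t => hC _)
    obtain ⟨α', hα', ⟨hαα', H₀, H₁⟩ | ⟨hαα', H₀, H₁⟩⟩ := exists_isHalf_dyadicMix u T hα <;>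
    · have hD : D ⟨α, hα⟩ = D ⟨α', hα'⟩ / 2 := by
        simp only [D, integral_eq_of_isHalf hint (H₀.comp G) (H₁.comp G),
          intervalIntegral.integral_const, smul_eq_mul]
        linear_combination (G u - ∫ t in (0 : ℝ)..1, G (T t)) * hαα'
      exact ⟨⟨α', hα'⟩, by rw [hD, abs_div, abs_two]⟩

lemma map_dyadicMix (hT : Measurable T) (hα : α ∈ Icc (0 : ℝ) 1) :
    Measure.map (dyadicMix T u α) (volume.restrict (Ioc 0 1)) =
      ENNReal.ofReal (1 - α) • Measure.dirac u +
        ENNReal.ofReal α • Measure.map T (volume.restrict (Ioc 0 1)) := by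
  have hmix := measurable_dyadicMix u hT α
  ext S hS
  have hreal {f : ℝ → β} (hf : Measurable f) :
      ∫ t in (0 : ℝ)..1, S.indicator (1 : β → ℝ) (f t) =
        (volume.restrict (Ioc (0 : ℝ) 1)).real (f ⁻¹' S) := by
    rw [intervalIntegral.integral_of_le zero_le_one, ← integral_indicator_one (hf hS)]
    rfl
  have key := integral_comp_dyadicMix_of_bounded u hT (G := S.indicator 1)
    (measurable_one.indicator hS) (C := 1) (fun y => by by_cases hy : y ∈ S <;> simp [hy]) hα
  have hdirac : (Measure.dirac u).real S = S.indicator (1 : β → ℝ) u := by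
    rw [measureReal_def, Measure.dirac_apply' _ hS]
    by_cases hu : u ∈ S <;> simp [hu]
  rw [hreal hmix, hreal hT, ← hdirac] at key
  have hα₁ : 0 ≤ 1 - α := sub_nonneg.mpr hα.2
  simp only [Measure.add_apply, Measure.smul_apply, smul_eq_mul, Measure.map_apply hmix hS,
    Measure.map_apply hT hS, ← ofReal_measureReal (measure_ne_top _ _)]
  rw [key, ENNReal.ofReal_add (mul_nonneg hα₁ measureReal_nonneg)
    (mul_nonneg hα.1 measureReal_nonneg), ENNReal.ofReal_mul hα₁, ENNReal.ofReal_mul hα.1]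

section Integral

variable {E : Type*} [NormedAddCommGroup E] {G : β → E}

lemma integrable_ofReal_smul_dirac (r : ℝ) (hG : StronglyMeasurable G) :
    Integrable G (ENNReal.ofReal r • Measure.dirac u) :=
  (integrable_dirac' hG enorm_lt_top).smul_measure ENNReal.ofReal_ne_top

lemma integrable_ofReal_smul_map (r : ℝ) (hT : Measurable T) (hG : StronglyMeasurable G)
    (hGT : IntervalIntegrable (fun t => G (T t)) volume 0 1) :
    Integrable G (ENNReal.ofReal r • Measure.map T (volume.restrict (Ioc 0 1))) :=
  ((integrable_map_measure hG.aestronglyMeasurable hT.aemeasurable).mpr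
    ((intervalIntegrable_iff_integrableOn_Ioc_of_le zero_le_one).mp hGT)).smul_measure
      ENNReal.ofReal_ne_top

lemma intervalIntegrable_comp_dyadicMix (hT : Measurable T) (hα : α ∈ Icc (0 : ℝ) 1)
    (hG : StronglyMeasurable G) (hGT : IntervalIntegrable (fun t => G (T t)) volume 0 1) :
    IntervalIntegrable (fun t => G (dyadicMix T u α t)) volume 0 1 := by
  rw [intervalIntegrable_iff_integrableOn_Ioc_of_le zero_le_one]
  refine Integrable.comp_measurable ?_ (measurable_dyadicMix u hT α)
  rw [map_dyadicMix u hT hα]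
  exact (integrable_ofReal_smul_dirac u _ hG).add_measure
    (integrable_ofReal_smul_map _ hT hG hGT)

lemma integral_comp_dyadicMix [NormedSpace ℝ E] [CompleteSpace E] (hT : Measurable T)
    (hα : α ∈ Icc (0 : ℝ) 1) (hG : StronglyMeasurable G)
    (hGT : IntervalIntegrable (fun t => G (T t)) volume 0 1) :
    ∫ t in (0 : ℝ)..1, G (dyadicMix T u α t) =
      (1 - α) • G u + α • ∫ t in (0 : ℝ)..1, G (T t) := by
  rw [intervalIntegral.integral_of_le zero_le_one, intervalIntegral.integral_of_le zero_le_one,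
    ← integral_map (measurable_dyadicMix u hT α).aemeasurable hG.aestronglyMeasurable,
    map_dyadicMix u hT hα, integral_add_measure (integrable_ofReal_smul_dirac u _ hG)
      (integrable_ofReal_smul_map _ hT hG hGT), integral_smul_measure, integral_smul_measure,
    integral_dirac' _ _ hG, integral_map hT.aemeasurable hG.aestronglyMeasurable,
    ENNReal.toReal_ofReal hα.1, ENNReal.toReal_ofReal (sub_nonneg.mpr hα.2)]

end Integral

lemma integral_dyadicMix {T : ℝ → ℝ} (u : ℝ) (hT : Measurable T)
    (hint : IntervalIntegrable T volume 0 1) (hα : α ∈ Icc (0 : ℝ) 1) :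
    ∫ t in (0 : ℝ)..1, dyadicMix T u α t = (1 - α) * u + α * ∫ t in (0 : ℝ)..1, T t :=
  integral_comp_dyadicMix u hT hα stronglyMeasurable_id hint

lemma integral_dyadicMix_sq {T : ℝ → ℝ} (u : ℝ) (hT : Measurable T)
    (hsq : IntervalIntegrable (fun t => T t ^ 2) volume 0 1) (hα : α ∈ Icc (0 : ℝ) 1) :
    ∫ t in (0 : ℝ)..1, dyadicMix T u α t ^ 2 =
      (1 - α) * u ^ 2 + α * ∫ t in (0 : ℝ)..1, T t ^ 2 :=
  integral_comp_dyadicMix u hT hα (continuous_pow 2).stronglyMeasurable hsq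

lemma BMOd.dyadicMix {ε : ℝ} {T : ℝ → ℝ} (hbmo : BMOd ε T) (hT : Measurable T) {u : ℝ}
    (hu : ((∫ t in (0 : ℝ)..1, T t) - u) ^ 2 ≤ ε ^ 2) (hα : α ∈ Icc (0 : ℝ) 1) :
    BMOd ε (dyadicMix T u α) := by
  obtain ⟨hint, hsq, hosc⟩ := hbmo
  refine ⟨intervalIntegrable_comp_dyadicMix u hT hα stronglyMeasurable_id hint,
    intervalIntegrable_comp_dyadicMix u hT hα (continuous_pow 2).stronglyMeasurable hsq,
    fun n k hk => dyadicOsc_le_of_forall_isHalf (𝓕 := _root_.dyadicMix T u '' Icc 0 1) ?_ ?_ n _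
      (mem_image_of_mem _ hα) k hk⟩
  · rintro _ ⟨α, hα, rfl⟩
    have hunit : dyadicOsc T 0 0 ≤ ε ^ 2 := hosc 0 0 one_pos
    rw [dyadicOsc_zero] at hunit ⊢
    rw [integral_dyadicMix u hT hint hα, integral_dyadicMix_sq u hT hsq hα]
    set m := ∫ t in (0 : ℝ)..1, T t
    set m₂ := ∫ t in (0 : ℝ)..1, T t ^ 2
    calc (1 - α) * u ^ 2 + α * m₂ - ((1 - α) * u + α * m) ^ 2
        = α * (1 - α) * (m - u) ^ 2 + α * (m₂ - m ^ 2) := by ring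
      _ ≤ α * (1 - α) * ε ^ 2 + α * ε ^ 2 := by
          have := hα.1
          have := sub_nonneg.mpr hα.2
          gcongr
      _ ≤ ε ^ 2 := by nlinarith [mul_nonneg (sq_nonneg (1 - α)) (sq_nonneg ε)]
  · rintro _ ⟨α, hα, rfl⟩ i hi
    obtain ⟨α', hα', ⟨-, H₀, H₁⟩ | ⟨-, H₀, H₁⟩⟩ := exists_isHalf_dyadicMix u T hα <;>
      interval_cases i
    · exact ⟨_, H₀, .inl (mem_image_of_mem _ hα')⟩
    · exact ⟨_, H₁, .inr fun n k _ => (dyadicOsc_const u n k).trans_le (sq_nonneg ε)⟩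
    · exact ⟨_, H₀, .inr hosc⟩
    · exact ⟨_, H₁, .inl (mem_image_of_mem _ hα')⟩

end DyadicMix

section Tangent

/-- The tangent to `x₂ = x₁² + δ²` at `x₁ = u + δ`, parametrised by the horizontal distance `r` to
the point of tangency; it meets `x₂ = x₁²` at `r = δ` in `(u, u²)`. -/
def tangentPoint (δ u r : ℝ) : ℝ × ℝ := (u + δ - r, (u + δ - r) ^ 2 + (δ ^ 2 - r ^ 2))

variable {δ ε : ℝ}

lemma exists_tangentPoint_eq (hε : 0 ≤ ε) (hεδ : ε ≤ δ) {x : ℝ × ℝ} (hx : x ∈ Omega ε) :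
    ∃ u, ∃ α ∈ Icc (0 : ℝ) 1,
      tangentPoint δ u ((1 - α) * δ + α * √(δ ^ 2 - ε ^ 2)) = x := by
  obtain ⟨hx₁, hx₂⟩ := hx
  have hδ : 0 ≤ δ := hε.trans hεδ
  have hs : √(δ ^ 2 - ε ^ 2) ≤ √(δ ^ 2 + x.1 ^ 2 - x.2) := sqrt_le_sqrt (by linarith)
  have hr : √(δ ^ 2 + x.1 ^ 2 - x.2) ≤ δ := (sqrt_le_left hδ).mpr (by linarith)
  have hseg : √(δ ^ 2 + x.1 ^ 2 - x.2) ∈ segment ℝ δ √(δ ^ 2 - ε ^ 2) := by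
    rw [segment_symm, segment_eq_Icc (hs.trans hr)]
    exact ⟨hs, hr⟩
  rw [segment_eq_image] at hseg
  obtain ⟨α, hα, hαr⟩ := hseg
  simp only [smul_eq_mul] at hαr
  have hsq : √(δ ^ 2 + x.1 ^ 2 - x.2) ^ 2 = δ ^ 2 + x.1 ^ 2 - x.2 := sq_sqrt (by nlinarith)
  refine ⟨x.1 + √(δ ^ 2 + x.1 ^ 2 - x.2) - δ, α, hα, ?_⟩
  rw [hαr, tangentPoint, hsq]
  ext <;> ring

lemma sub_sqrt_sq_sub_sq_sq_le (hε : 0 ≤ ε) (hεδ : ε ≤ δ) :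
    (δ - √(δ ^ 2 - ε ^ 2)) ^ 2 ≤ ε ^ 2 := by
  have hs : √(δ ^ 2 - ε ^ 2) ≤ δ := (sqrt_le_left (hε.trans hεδ)).mpr (by nlinarith)
  have hsq : √(δ ^ 2 - ε ^ 2) ^ 2 = δ ^ 2 - ε ^ 2 := sq_sqrt (by nlinarith)
  nlinarith [sqrt_nonneg (δ ^ 2 - ε ^ 2)]

lemma Bp_tangentPoint (δ u : ℝ) {r : ℝ} (hr : 0 ≤ r) :
    Bp δ (tangentPoint δ u r) = (1 - r) / (1 - δ) * exp u := by
  have hroot : √(δ ^ 2 + (u + δ - r) ^ 2 - ((u + δ - r) ^ 2 + (δ ^ 2 - r ^ 2))) = r := by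
    rw [← sqrt_sq hr]; congr 1; rw [sqrt_sq hr]; ring
  simp only [Bp, tangentPoint, hroot]
  ring_nf

lemma Bp_tangentPoint_convexCombination (hδ : 0 ≤ δ) (hδ₁ : δ ≠ 1) (u : ℝ) {s α : ℝ} (hs : 0 ≤ s)
    (hα : α ∈ Icc (0 : ℝ) 1) :
    Bp δ (tangentPoint δ u ((1 - α) * δ + α * s)) =
      (1 - α) * exp u + α * Bp δ (tangentPoint δ u s) := by
  have hr : 0 ≤ (1 - α) * δ + α * s :=
    add_nonneg (mul_nonneg (sub_nonneg.mpr hα.2) hδ) (mul_nonneg hα.1 hs)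
  have h1δ : 1 - δ ≠ 0 := sub_ne_zero.mpr hδ₁.symm
  rw [Bp_tangentPoint δ u hr, Bp_tangentPoint δ u hs]
  field_simp
  ring

lemma Bp_tangentPoint_of_g_eq_zero (hg : g δ ε = 0) (hδ₁ : δ ≠ 1) (hh : ε / √2 < log 2) (u : ℝ) :
    Bp δ (tangentPoint δ u √(δ ^ 2 - ε ^ 2)) =
      exp (u + δ - √(δ ^ 2 - ε ^ 2) - ε / √2) / (2 - exp (ε / √2)) := by
  have hexp : 2 - exp (ε / √2) ≠ 0 := (sub_pos.mpr ((lt_log_iff_exp_lt two_pos).mp hh)).ne'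
  have h1δ : 1 - δ ≠ 0 := sub_ne_zero.mpr hδ₁.symm
  have hsplit : exp (u + δ - √(δ ^ 2 - ε ^ 2) - ε / √2) * exp √(δ ^ 2 - ε ^ 2) =
      exp u * exp (δ - ε / √2) := by
    rw [← exp_add, ← exp_add]; ring_nf
  have hroot : (1 - √(δ ^ 2 - ε ^ 2)) * exp √(δ ^ 2 - ε ^ 2) * (2 - exp (ε / √2)) =
      (1 - δ) * exp (δ - ε / √2) := sub_eq_zero.mp hg
  rw [Bp_tangentPoint δ u (sqrt_nonneg _), eq_div_iff hexp]
  refine mul_right_cancel₀ (exp_ne_zero √(δ ^ 2 - ε ^ 2)) ?_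
  rw [hsplit, div_mul_eq_mul_div, div_mul_eq_mul_div, div_mul_eq_mul_div, div_eq_iff h1δ]
  linear_combination exp u * hroot

end Tangent

/-- Dyadic extremal functions: if `δ ∈ (ε,1)` solves `g(δ,ε) = 0`, then for
every `x ∈ Ω_ε` there is `φ ∈ BMO^d_ε([0,1])` with the prescribed averages
attaining the value `B⁺_δ(x)`. -/
theorem stmt14 (ε δ : ℝ) (hε0 : 0 < ε) (hε1 : ε < Real.sqrt 2 * Real.log 2)
    (hδ : δ ∈ Set.Ioo ε 1) (hg : g δ ε = 0)
    (x : ℝ × ℝ) (hx : x ∈ Omega ε) :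
    ∃ φ : ℝ → ℝ, BMOd ε φ ∧
      (∫ t in (0:ℝ)..1, φ t) = x.1 ∧
      (∫ t in (0:ℝ)..1, (φ t) ^ 2) = x.2 ∧
      IntervalIntegrable (fun t => Real.exp (φ t)) volume 0 1 ∧
      (∫ t in (0:ℝ)..1, Real.exp (φ t)) = Bp δ x := by
  obtain ⟨hεδ, hδ1⟩ := hδ
  obtain ⟨u, α, hα, rfl⟩ := exists_tangentPoint_eq hε0.le hεδ.le hx
  have hh : ε / √2 < log 2 := by rwa [div_lt_iff₀' (by positivity)]
  have hvar : 2 * (ε / √2) ^ 2 = ε ^ 2 := by rw [div_pow, sq_sqrt two_pos.le]; ring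
  have hs : √(δ ^ 2 - ε ^ 2) ^ 2 = δ ^ 2 - ε ^ 2 := sq_sqrt (by nlinarith)
  set c := u + δ - √(δ ^ 2 - ε ^ 2) with hc
  have hT := measurable_logStep (ε / √2) c
  have hexp := intervalIntegrable_exp_logStep c hh
  refine ⟨dyadicMix (logStep (ε / √2) c) u α, (bmod_logStep c hvar.le).dyadicMix hT ?_ hα, ?_, ?_,
    intervalIntegrable_comp_dyadicMix u hT hα continuous_exp.stronglyMeasurable hexp, ?_⟩
  · rw [integral_logStep, hc, add_sub_assoc, add_sub_cancel_left]
    exact sub_sqrt_sq_sub_sq_sq_le hε0.le hεδ.le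
  · rw [integral_dyadicMix u hT (intervalIntegrable_logStep _ c) hα, integral_logStep, tangentPoint]
    ring
  · rw [integral_dyadicMix_sq u hT (intervalIntegrable_logStep_sq _ c) hα, integral_logStep_sq,
      hvar, tangentPoint]
    linear_combination α * hs
  · rw [integral_comp_dyadicMix u hT hα continuous_exp.stronglyMeasurable hexp,
      integral_exp_logStep c hh, Bp_tangentPoint_convexCombination (hε0.trans hεδ).le hδ1.ne u
      (sqrt_nonneg _) hα, Bp_tangentPoint_of_g_eq_zero hg hδ1.ne hh u, smul_eq_mul, smul_eq_mul]
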